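/- Fubini for products of arbitrary measures: Let μ, ν be measures on σ-rings 𝔖, 𝔗 and μ⊗ν their product (equal to μ^σ⊗ν^σ on σ-finite sets, ∞ elsewhere). For any μ⊗ν-integrable f : S×T → [-∞,∞], the iterated integrals exist, the sections s ↦ f(s,·) are ν-integrable for μ-almost every s (and symmetrically), and ∫ f d(μ⊗ν) = ∫ (∫ f(s,t) dν(t)) dμ(s) = ∫ (∫ f(s,t) dμ(s)) dν(t). -/

import Mathlib

open Set ENNReal

/-- A family of sets is a σ-ring if it contains `∅` and is closed under
set differences and countable unions. -/
def IsSigmaRing {α : Type*} (C : Set (Set α)) : Prop :=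
  ∅ ∈ C ∧ (∀ A B : Set α, A ∈ C → B ∈ C → A \ B ∈ C) ∧
    ∀ f : ℕ → Set α, (∀ n, f n ∈ C) → (⋃ n, f n) ∈ C

/-- The σ-ring generated by a family of sets. -/
def genSR {α : Type*} (D : Set (Set α)) : Set (Set α) :=
  ⋂₀ {C | IsSigmaRing C ∧ D ⊆ C}

/-- A measure on a σ-ring: countably additive, vanishing on `∅`. -/
def IsMeasure {α : Type*} (C : Set (Set α)) (μ : Set α → ℝ≥0∞) : Prop :=
  μ ∅ = 0 ∧ ∀ f : ℕ → Set α, (∀ n, f n ∈ C) →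
    Pairwise (Function.onFun Disjoint f) → μ (⋃ n, f n) = ∑' n, μ (f n)

/-- The family of μ-σ-finite sets: countable unions of sets of finite measure. -/
def sigmaFin {α : Type*} (C : Set (Set α)) (μ : Set α → ℝ≥0∞) : Set (Set α) :=
  {A | ∃ g : ℕ → Set α, (∀ n, g n ∈ C ∧ μ (g n) < ⊤) ∧ A = ⋃ n, g n}

/-- Restriction of a family of sets to a set `S`. -/
def restrictFam {α : Type*} (D : Set (Set α)) (S : Set α) : Set (Set α) :=
  (fun A => A ∩ S) '' D

/-- The product σ-ring, generated by measurable rectangles. -/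
def prodSR {α β : Type*} (S : Set (Set α)) (T : Set (Set β)) : Set (Set (α × β)) :=
  genSR {R | ∃ A ∈ S, ∃ B ∈ T, R = A ×ˢ B}

/-- The σ-algebra generated by a family of sets. -/
def genSA {α : Type*} (D : Set (Set α)) : MeasurableSpace α :=
  MeasurableSpace.generateFrom D

/-- The (extended) Lebesgue integral of a nonnegative function with respect to a
measure on a σ-ring, as the supremum of integrals of simple functions below it. -/
noncomputable def lintSR {α : Type*} (C : Set (Set α)) (μ : Set α → ℝ≥0∞)
    (f : α → ℝ≥0∞) : ℝ≥0∞ :=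
  ⨆ (n : ℕ) (c : Fin n → ℝ≥0∞) (A : Fin n → Set α) (_ : ∀ i, A i ∈ C)
    (_ : ∀ x, (∑ i, (A i).indicator (fun _ => c i) x) ≤ f x),
    ∑ i, c i * μ (A i)

/-- The positive part of an extended real, as an `ℝ≥0∞`. -/
noncomputable def epos (x : EReal) : ℝ≥0∞ := (x ⊔ 0).abs

/-- Measurability of an extended-real function with respect to a σ-ring:
measurable for the generated σ-algebra, with support in the σ-ring. -/
def SRMeasurableE {α : Type*} (C : Set (Set α)) (f : α → EReal) : Prop :=
  @Measurable α EReal (genSA C) _ f ∧ {x | f x ≠ 0} ∈ C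

/-- The Lebesgue integral of an extended-real function w.r.t. a measure on a σ-ring. -/
noncomputable def integralE {α : Type*} (C : Set (Set α)) (μ : Set α → ℝ≥0∞)
    (f : α → EReal) : EReal :=
  ((lintSR C μ fun x => epos (f x) : ℝ≥0∞) : EReal) -
    ((lintSR C μ fun x => epos (-f x) : ℝ≥0∞) : EReal)

/-- Integrability of an extended-real function w.r.t. a measure on a σ-ring. -/
def IntegrableE {α : Type*} (C : Set (Set α)) (μ : Set α → ℝ≥0∞)
    (f : α → EReal) : Prop :=
  SRMeasurableE C f ∧ lintSR C μ (fun x => (f x).abs) < ⊤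

/-- `lam` is the product of the measures `μ` and `ν` on σ-rings `S`, `T`:
the unique measure on the product σ-ring whose σ-finite component is the Halmos
product of the σ-finite components. -/
def IsProdMeasure {α β : Type*} (S : Set (Set α)) (T : Set (Set β))
    (μ : Set α → ℝ≥0∞) (ν : Set β → ℝ≥0∞) (lam : Set (α × β) → ℝ≥0∞) : Prop :=
  IsMeasure (prodSR S T) lam ∧
  (∀ A ∈ S, ∀ B ∈ T, μ A < ⊤ → ν B < ⊤ → lam (A ×ˢ B) = μ A * ν B) ∧
  sigmaFin (prodSR S T) lam =
    genSR {R | ∃ A ∈ S, ∃ B ∈ T, μ A < ⊤ ∧ ν B < ⊤ ∧ R = A ×ˢ B}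

/-!
Only a σ-finite part of the measures is visible to an integrable function. By Chebyshev, the
support of `f` is `lam`-σ-finite, and since `lam`-σ-finite sets are generated by rectangles with
sides of finite measure, the support lies in a rectangle `A ×ˢ B` with σ-finite sides. On `A`, `B`
and `A ×ˢ B` the set functions `μ`, `ν` and `lam` are traces of genuine σ-finite measures on
σ-algebras, the third being the product of the first two. As an integrable function is almost
everywhere real valued, the claim becomes Fubini's theorem for the Bochner integral.
-/

open MeasureTheory Function

section SigmaRing

variable {α : Type*} {C D : Set (Set α)} {μ : Set α → ℝ≥0∞} {A B E : Set α}

theorem IsSigmaRing.inter_mem (hC : IsSigmaRing C) (hA : A ∈ C) (hB : B ∈ C) : A ∩ B ∈ C := by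
  rw [← sdiff_sdiff_right_self]
  exact hC.2.1 _ _ hA (hC.2.1 _ _ hA hB)

theorem IsSigmaRing.inter_mem_of_generateFrom (hC : IsSigmaRing C) (hA : A ∈ C)
    (hD : ∀ E ∈ D, E ∩ A ∈ C) (hE : MeasurableSet[MeasurableSpace.generateFrom D] E) :
    E ∩ A ∈ C := by
  induction E, hE using MeasurableSpace.generateFrom_induction with
  | hC E hE _ => exact hD E hE
  | empty => simpa only [empty_inter] using hC.1
  | compl E _ ih =>
    have compl_inter_eq : Eᶜ ∩ A = A \ (E ∩ A) := by
      rw [sdiff_inter_self_eq_sdiff, sdiff_eq, inter_comm]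
    exact compl_inter_eq ▸ hC.2.1 _ _ hA ih
  | iUnion E _ ih => exact iUnion_inter A E ▸ hC.2.2 _ ih

theorem isSigmaRing_measurableSet [MeasurableSpace α] :
    IsSigmaRing {E : Set α | MeasurableSet E} :=
  ⟨.empty, fun _ _ => MeasurableSet.diff, fun _ hE => MeasurableSet.iUnion hE⟩

theorem isSigmaRing_genSR (D : Set (Set α)) : IsSigmaRing (genSR D) :=
  ⟨fun _ h => h.1.1, fun _ _ hA hB _ h => h.1.2.1 _ _ (hA _ h) (hB _ h),
    fun _ hf _ h => h.1.2.2 _ fun n => hf n _ h⟩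

theorem subset_genSR (D : Set (Set α)) : D ⊆ genSR D :=
  fun _ hA _ h => h.2 hA

theorem genSR_subset (hC : IsSigmaRing C) (hDC : D ⊆ C) : genSR D ⊆ C :=
  sInter_subset_of_mem ⟨hC, hDC⟩

theorem IsSigmaRing.sigmaFin_subset (hC : IsSigmaRing C) : sigmaFin C μ ⊆ C := by
  rintro _ ⟨g, hg, rfl⟩
  exact hC.2.2 g fun n => (hg n).1

theorem mem_sigmaFin_of_lt_top (hA : A ∈ C) (hμA : μ A < ⊤) : A ∈ sigmaFin C μ :=
  ⟨fun _ => A, fun _ => ⟨hA, hμA⟩, (iUnion_const A).symm⟩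

theorem iUnion_mem_sigmaFin {A : ℕ → Set α} (hA : ∀ n, A n ∈ sigmaFin C μ) :
    ⋃ n, A n ∈ sigmaFin C μ := by
  choose g hg hAg using hA
  refine ⟨fun k => g k.unpair.1 k.unpair.2, fun k => hg _ _, ?_⟩
  simp_rw [hAg]
  exact (iUnion_unpair g).symm

end SigmaRing

section Carrier

variable {α β : Type*} [MeasurableSpace α] [MeasurableSpace β] {C S : Set (Set α)}
  {T : Set (Set β)} {A E : Set α} {B : Set β}

/-- A carrier of the σ-ring `C` of measurable sets: a set `A` on which `C` and the ambient σ-algebra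
have the same trace. The σ-algebra is not required to be `genSA C`, because for a product σ-ring it
will be the product σ-algebra, which is larger in general. -/
structure IsCarrier (C : Set (Set α)) (A : Set α) : Prop where
  measurableSet_of_mem : ∀ ⦃E⦄, E ∈ C → MeasurableSet E
  inter_mem : ∀ ⦃E⦄, MeasurableSet E → E ∩ A ∈ C

theorem IsSigmaRing.isCarrier {α : Type*} {C : Set (Set α)} {A : Set α} (hC : IsSigmaRing C)
    (hA : A ∈ C) : @IsCarrier α (genSA C) C A :=
  @IsCarrier.mk α (genSA C) C A (fun _ => MeasurableSpace.measurableSet_generateFrom)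
    fun _ => hC.inter_mem_of_generateFrom hA fun _ hE => hC.inter_mem hE hA

theorem IsCarrier.mem (hA : IsCarrier C A) : A ∈ C :=
  univ_inter A ▸ hA.inter_mem .univ

theorem IsCarrier.mem_of_subset (hA : IsCarrier C A) (hE : MeasurableSet E) (hEA : E ⊆ A) :
    E ∈ C :=
  inter_eq_left.2 hEA ▸ hA.inter_mem hE

theorem IsCarrier.prod (hA : IsCarrier S A) (hB : IsCarrier T B) :
    IsCarrier (prodSR S T) (A ×ˢ B) where
  measurableSet_of_mem := by
    refine genSR_subset isSigmaRing_measurableSet ?_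
    rintro _ ⟨A', hA', B', hB', rfl⟩
    exact (hA.measurableSet_of_mem hA').prod (hB.measurableSet_of_mem hB')
  inter_mem E hE := by
    have prod_mem {A' B'} (hA' : A' ∈ S) (hB' : B' ∈ T) : A' ×ˢ B' ∈ prodSR S T :=
      subset_genSR _ ⟨A', hA', B', hB', rfl⟩
    rw [← generateFrom_prod] at hE
    refine (isSigmaRing_genSR _).inter_mem_of_generateFrom (prod_mem hA.mem hB.mem) ?_ hE
    rintro _ ⟨A', hA', B', hB', rfl⟩
    exact prod_inter_prod ▸ prod_mem (hA.inter_mem hA') (hB.inter_mem hB')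

theorem IsCarrier.measurable (hA : IsCarrier C A) {f : α → EReal} (hf : SRMeasurableE C f) :
    Measurable f :=
  hf.1.mono (MeasurableSpace.generateFrom_le hA.measurableSet_of_mem) le_rfl

theorem IsCarrier.srMeasurableE (hA : IsCarrier C A) {f : α → EReal} (hf : Measurable f)
    (hfA : support f ⊆ A) : SRMeasurableE C f := by
  have preimage_mem {E : Set EReal} (hE : MeasurableSet E) (h0 : 0 ∉ E) : f ⁻¹' E ∈ C :=
    hA.mem_of_subset (hf hE) fun x hx => hfA fun hx0 => h0 (hx0 ▸ hx)
  refine ⟨fun E hE => ?_, preimage_mem (measurableSet_singleton 0).compl (by simp)⟩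
  by_cases h0 : 0 ∈ E
  · rw [← @MeasurableSet.compl_iff _ _ (genSA C), ← preimage_compl]
    exact MeasurableSpace.measurableSet_generateFrom (preimage_mem hE.compl (by simpa using h0))
  · exact MeasurableSpace.measurableSet_generateFrom (preimage_mem hE h0)

end Carrier

section TraceMeasure

variable {α : Type*} [MeasurableSpace α] {C : Set (Set α)} {μ : Set α → ℝ≥0∞} {A : Set α}

/-- The measure `E ↦ μ (E ∩ A)` on the ambient σ-algebra, for a measure `μ` on a σ-ring with
carrier `A`. It turns integrals over `A` into integrals for a measure on a σ-algebra. -/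
noncomputable def IsCarrier.traceMeasure (hA : IsCarrier C A) (hμ : IsMeasure C μ) : Measure α :=
  .ofMeasurable (fun E _ => μ (E ∩ A)) (by simpa only [empty_inter] using hμ.1) fun E hE hdisj => by
    rw [iUnion_inter]
    exact hμ.2 _ (fun n => hA.inter_mem (hE n)) fun _ _ hij =>
      (hdisj hij).mono inter_subset_left inter_subset_left

theorem IsCarrier.traceMeasure_apply (hA : IsCarrier C A) (hμ : IsMeasure C μ) {E : Set α}
    (hE : MeasurableSet E) : hA.traceMeasure hμ E = μ (E ∩ A) :=
  Measure.ofMeasurable_apply E hE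

theorem IsCarrier.sigmaFinite_traceMeasure (hA : IsCarrier C A) (hμ : IsMeasure C μ)
    (hσ : A ∈ sigmaFin C μ) : SigmaFinite (hA.traceMeasure hμ) := by
  obtain ⟨g, hg, hAg⟩ := hσ
  refine ⟨⟨⟨fun n => g n ∪ Aᶜ, fun _ => trivial, fun n => ?_, ?_⟩⟩⟩
  · have measurableSet_union : MeasurableSet (g n ∪ Aᶜ) :=
      (hA.measurableSet_of_mem (hg n).1).union (hA.measurableSet_of_mem hA.mem).compl
    rw [hA.traceMeasure_apply hμ measurableSet_union, union_inter_distrib_right, compl_inter_self,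
      union_empty, inter_eq_left.2 (hAg ▸ subset_iUnion g n)]
    exact (hg n).2
  · rw [← iUnion_union, ← hAg, union_compl_self]

theorem IsCarrier.exists_null_of_ae (hA : IsCarrier C A) (hμ : IsMeasure C μ) {p : α → Prop}
    (hp : ∀ᵐ x ∂hA.traceMeasure hμ, p x) : ∃ N ∈ C, μ N = 0 ∧ ∀ x ∈ A, x ∉ N → p x := by
  obtain ⟨N, hpN, hN, hN0⟩ := exists_measurable_superset_of_null (ae_iff.1 hp)
  rw [hA.traceMeasure_apply hμ hN] at hN0
  exact ⟨N ∩ A, hA.inter_mem hN, hN0, fun x hxA hxN => by_contra fun hpx => hxN ⟨hpN hpx, hxA⟩⟩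

end TraceMeasure

section LintSR

variable {α ι : Type*} {C : Set (Set α)} {μ : Set α → ℝ≥0∞} {A : Set α} {h : α → ℝ≥0∞}

theorem sum_le_lintSR (s : Finset ι) (c : ι → ℝ≥0∞) (A : ι → Set α) (hA : ∀ i, A i ∈ C)
    (hle : ∀ x, ∑ i ∈ s, (A i).indicator (fun _ => c i) x ≤ h x) :
    ∑ i ∈ s, c i * μ (A i) ≤ lintSR C μ h := by
  have sum_equivFin (g : ι → ℝ≥0∞) : ∑ j, g (s.equivFin.symm j) = ∑ i ∈ s, g i := by
    rw [← Finset.sum_coe_sort s, ← s.equivFin.symm.sum_comp]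
  rw [← sum_equivFin]
  refine le_iSup_of_le s.card <| le_iSup_of_le (fun j => c (s.equivFin.symm j)) <|
    le_iSup_of_le (fun j => A (s.equivFin.symm j)) <| le_iSup_of_le (fun j => hA _) <|
    le_iSup_of_le (fun x => ?_) le_rfl
  exact (sum_equivFin fun i => (A i).indicator (fun _ => c i) x).trans_le (hle x)

theorem mul_meas_le_lintSR {c : ℝ≥0∞} (hA : A ∈ C) (hle : ∀ x ∈ A, c ≤ h x) :
    c * μ A ≤ lintSR C μ h := by
  simpa using sum_le_lintSR {()} (fun _ => c) (fun _ => A) (fun _ => hA) fun x => by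
    simpa using indicator_le hle x

theorem support_mem_sigmaFin_of_lintSR_ne_top (hmem : ∀ c ≠ 0, {x | c ≤ h x} ∈ C)
    (hfin : lintSR C μ h ≠ ⊤) : support h ∈ sigmaFin C μ := by
  have inv_ne_zero (n : ℕ) : (n : ℝ≥0∞)⁻¹ ≠ 0 := ENNReal.inv_ne_zero.2 (natCast_ne_top n)
  refine ⟨fun n => {x | (n : ℝ≥0∞)⁻¹ ≤ h x}, fun n => ⟨hmem _ (inv_ne_zero n), ?_⟩, ?_⟩
  · have chebyshev : (n : ℝ≥0∞)⁻¹ * μ {x | (n : ℝ≥0∞)⁻¹ ≤ h x} ≤ lintSR C μ h :=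
      mul_meas_le_lintSR (hmem _ (inv_ne_zero n)) fun _ => id
    exact lt_top_of_mul_ne_top_right (chebyshev.trans_lt hfin.lt_top).ne (inv_ne_zero n)
  · ext x
    rw [mem_support, mem_iUnion]
    refine ⟨fun hx => ?_, fun ⟨n, hn⟩ => ((pos_iff_ne_zero.2 (inv_ne_zero n)).trans_le hn).ne'⟩
    obtain ⟨n, hn⟩ := exists_inv_nat_lt hx
    exact ⟨n, hn.le⟩

variable [MeasurableSpace α]

theorem IsCarrier.lintegral_le_lintSR (hA : IsCarrier C A) (hμ : IsMeasure C μ) :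
    ∫⁻ x, h x ∂hA.traceMeasure hμ ≤ lintSR C μ h := by
  rw [lintegral_def]
  refine iSup₂_le fun g hg => ?_
  simp_rw [SimpleFunc.lintegral, hA.traceMeasure_apply hμ (g.measurableSet_fiber _)]
  refine sum_le_lintSR g.range id (fun y => g ⁻¹' {y} ∩ A)
    (fun y => hA.inter_mem (g.measurableSet_fiber y)) fun x => le_trans ?_ (hg x)
  rw [Finset.sum_eq_single_of_mem (g x) (g.mem_range_self x)]
  · exact indicator_le_self' (fun _ _ => zero_le) x
  · exact fun y _ hy => indicator_of_notMem (fun hx => hy hx.1.symm) _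

theorem IsCarrier.lintSR_le_lintegral (hA : IsCarrier C A) (hμ : IsMeasure C μ)
    (hhA : support h ⊆ A) : lintSR C μ h ≤ ∫⁻ x, h x ∂hA.traceMeasure hμ := by
  refine iSup_le fun n => iSup_le fun c => iSup_le fun B => iSup₂_le fun hB hle => ?_
  have subset_carrier (i : Fin n) (hci : c i ≠ 0) : B i ⊆ A := fun x hx => hhA fun hx0 => hci <| by
    have term_eq_zero := Finset.sum_eq_zero_iff.1 (nonpos_iff_eq_zero.1 (hx0 ▸ hle x)) i
    simpa only [Finset.mem_univ, indicator_of_mem hx, true_imp_iff] using term_eq_zero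
  calc ∑ i, c i * μ (B i) = ∑ i, c i * hA.traceMeasure hμ (B i) := by
        refine Finset.sum_congr rfl fun i _ => ?_
        rcases eq_or_ne (c i) 0 with hci | hci
        · simp only [hci, zero_mul]
        · rw [hA.traceMeasure_apply hμ (hA.measurableSet_of_mem (hB i)),
            inter_eq_left.2 (subset_carrier i hci)]
    _ = ∫⁻ x, ∑ i, (B i).indicator (fun _ => c i) x ∂hA.traceMeasure hμ := by
        have hBm (i : Fin n) := hA.measurableSet_of_mem (hB i)
        rw [lintegral_finsetSum _ fun i _ => measurable_const.indicator (hBm i)]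
        simp_rw [lintegral_indicator_const (hBm _)]
    _ ≤ ∫⁻ x, h x ∂hA.traceMeasure hμ := lintegral_mono hle

theorem IsCarrier.lintSR_eq_lintegral (hA : IsCarrier C A) (hμ : IsMeasure C μ)
    (hhA : support h ⊆ A) : lintSR C μ h = ∫⁻ x, h x ∂hA.traceMeasure hμ :=
  (hA.lintSR_le_lintegral hμ hhA).antisymm (hA.lintegral_le_lintSR hμ)

end LintSR

section ERealIntegral

variable {α β : Type*} [MeasurableSpace α] [MeasurableSpace β] {M : Measure α} {N : Measure β}

theorem epos_eq_toENNReal (x : EReal) : epos x = x.toENNReal := by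
  rcases le_total x 0 with hx | hx
  · rw [epos, sup_of_le_right hx, EReal.abs_zero, EReal.toENNReal_of_nonpos hx]
  · rw [epos, sup_of_le_left hx]
    induction x with
    | bot => simp at hx
    | top => simp
    | coe x => rw [EReal.abs_def, abs_of_nonneg (mod_cast hx), EReal.real_coe_toENNReal]

theorem measurable_ereal_abs : Measurable EReal.abs :=
  EReal.measurable_of_measurable_real (measurable_ofReal.comp (measurable_norm (α := ℝ)))

theorem enorm_toReal_le_abs (x : EReal) : ‖x.toReal‖ₑ ≤ x.abs := by
  induction x with
  | bot | top => simp
  | coe x => rw [EReal.toReal_coe, EReal.abs_def, ← Real.enorm_eq_ofReal_abs]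

theorem coe_toReal_of_abs_lt_top {x : EReal} (hx : x.abs < ⊤) : (x.toReal : EReal) = x :=
  EReal.coe_toReal (by rintro rfl; simp at hx) (by rintro rfl; simp at hx)

/-- The integral of an extended-real function for a measure on a σ-algebra, the counterpart of
`integralE`. It has the junk value `⊥` when the positive and the negative part both have infinite
integral, as `⊤ - ⊤ = ⊥` in `EReal`. -/
noncomputable def erealIntegral (M : Measure α) (f : α → EReal) : EReal :=
  ((∫⁻ x, (f x).toENNReal ∂M : ℝ≥0∞) : EReal) - ((∫⁻ x, (-f x).toENNReal ∂M : ℝ≥0∞) : EReal)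

theorem erealIntegral_congr_ae {f g : α → EReal} (hfg : f =ᵐ[M] g) :
    erealIntegral M f = erealIntegral M g := by
  have pos_congr : ∫⁻ x, (f x).toENNReal ∂M = ∫⁻ x, (g x).toENNReal ∂M :=
    lintegral_congr_ae (hfg.fun_comp EReal.toENNReal)
  have neg_congr : ∫⁻ x, (-f x).toENNReal ∂M = ∫⁻ x, (-g x).toENNReal ∂M :=
    lintegral_congr_ae (hfg.fun_comp fun y => (-y).toENNReal)
  rw [erealIntegral, pos_congr, neg_congr, erealIntegral]

theorem erealIntegral_coe {g : α → ℝ} (hg : Integrable g M) :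
    erealIntegral M (fun x => (g x : EReal)) = ((∫ x, g x ∂M : ℝ) : EReal) := by
  have hpos : ∫⁻ x, ENNReal.ofReal (g x) ∂M ≠ ⊤ := hg.lintegral_lt_top.ne
  have hneg : ∫⁻ x, ENNReal.ofReal (-g x) ∂M ≠ ⊤ := hg.neg.lintegral_lt_top.ne
  simp only [erealIntegral, ← EReal.coe_neg, EReal.real_coe_toENNReal]
  rw [integral_eq_lintegral_pos_part_sub_lintegral_neg_part hg, EReal.coe_sub,
    EReal.coe_ennreal_toReal hpos, EReal.coe_ennreal_toReal hneg]

theorem integrable_toReal_of_lintegral_abs {f : α → EReal} (hf : AEMeasurable f M)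
    (hfin : ∫⁻ x, (f x).abs ∂M < ⊤) : Integrable (fun x => (f x).toReal) M :=
  ⟨hf.ereal_toReal.aestronglyMeasurable,
    (lintegral_mono fun x => enorm_toReal_le_abs (f x)).trans_lt hfin⟩

theorem erealIntegral_eq_integral_toReal {f : α → EReal} (hf : AEMeasurable f M)
    (hfin : ∫⁻ x, (f x).abs ∂M < ⊤) :
    erealIntegral M f = ((∫ x, (f x).toReal ∂M : ℝ) : EReal) := by
  have ae_coe_toReal : f =ᵐ[M] fun x => ((f x).toReal : EReal) := by
    filter_upwards [ae_lt_top' (measurable_ereal_abs.comp_aemeasurable hf) hfin.ne] with x hx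
      using (coe_toReal_of_abs_lt_top hx).symm
  rw [erealIntegral_congr_ae ae_coe_toReal,
    erealIntegral_coe (integrable_toReal_of_lintegral_abs hf hfin)]

variable [SFinite N] {f : α × β → EReal}

theorem ae_lintegral_abs_section_lt_top (hf : AEMeasurable f (M.prod N))
    (hfin : ∫⁻ z, (f z).abs ∂M.prod N < ⊤) : ∀ᵐ s ∂M, ∫⁻ t, (f (s, t)).abs ∂N < ⊤ := by
  have habs : AEMeasurable (fun z => (f z).abs) (M.prod N) :=
    measurable_ereal_abs.comp_aemeasurable hf
  rw [lintegral_prod _ habs] at hfin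
  exact ae_lt_top' habs.lintegral_prod_right' hfin.ne

variable [SFinite M]

theorem erealIntegral_prod (hf : AEMeasurable f (M.prod N))
    (hfin : ∫⁻ z, (f z).abs ∂M.prod N < ⊤) :
    erealIntegral (M.prod N) f = erealIntegral M fun s => erealIntegral N fun t => f (s, t) := by
  have hint := integrable_toReal_of_lintegral_abs hf hfin
  have sections_ae_eq : (fun s => erealIntegral N fun t => f (s, t)) =ᵐ[M]
      fun s => ((∫ t, (f (s, t)).toReal ∂N : ℝ) : EReal) := by
    filter_upwards [hf.aestronglyMeasurable.prodMk_left, ae_lintegral_abs_section_lt_top hf hfin]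
      with s hs hsfin using erealIntegral_eq_integral_toReal hs.aemeasurable hsfin
  rw [erealIntegral_eq_integral_toReal hf hfin, integral_prod _ hint,
    erealIntegral_congr_ae sections_ae_eq, erealIntegral_coe hint.integral_prod_left]

theorem erealIntegral_prod_swap (f : α × β → EReal) :
    erealIntegral (N.prod M) (fun z => f z.swap) = erealIntegral (M.prod N) f := by
  rw [erealIntegral, lintegral_prod_swap fun z => (f z).toENNReal,
    lintegral_prod_swap fun z => (-f z).toENNReal, erealIntegral]

end ERealIntegral

theorem IsCarrier.integralE_eq_erealIntegral {α : Type*} [MeasurableSpace α] {C : Set (Set α)}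
    {μ : Set α → ℝ≥0∞} {A : Set α} (hA : IsCarrier C A) (hμ : IsMeasure C μ) {f : α → EReal}
    (hfA : support f ⊆ A) : integralE C μ f = erealIntegral (hA.traceMeasure hμ) f := by
  have support_pos : support (fun x => (f x).toENNReal) ⊆ A :=
    (support_comp_subset EReal.toENNReal_zero f).trans hfA
  have support_neg : support (fun x => (-f x).toENNReal) ⊆ A :=
    (support_comp_subset (g := fun y : EReal => (-y).toENNReal) (by simp) f).trans hfA
  simp only [integralE, epos_eq_toENNReal, erealIntegral, hA.lintSR_eq_lintegral hμ support_pos,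
    hA.lintSR_eq_lintegral hμ support_neg]

theorem IsCarrier.lintSR_abs_eq_lintegral {α : Type*} [MeasurableSpace α] {C : Set (Set α)}
    {μ : Set α → ℝ≥0∞} {A : Set α} (hA : IsCarrier C A) (hμ : IsMeasure C μ) {f : α → EReal}
    (hfA : support f ⊆ A) :
    lintSR C μ (fun x => (f x).abs) = ∫⁻ x, (f x).abs ∂hA.traceMeasure hμ :=
  hA.lintSR_eq_lintegral hμ ((support_comp_subset EReal.abs_zero f).trans hfA)

theorem IntegrableE.support_mem_sigmaFin {α : Type*} {C : Set (Set α)} {μ : Set α → ℝ≥0∞}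
    (hC : IsSigmaRing C) {f : α → EReal} (hf : IntegrableE C μ f) :
    support f ∈ sigmaFin C μ := by
  let _ := genSA C
  have hcarrier : IsCarrier C (support f) := hC.isCarrier hf.1.2
  have support_abs : support (fun x => (f x).abs) = support f := by
    ext x
    exact EReal.abs_eq_zero_iff.not
  have superlevel_mem (c : ℝ≥0∞) (hc : c ≠ 0) : {x | c ≤ (f x).abs} ∈ C :=
    hcarrier.mem_of_subset (measurable_ereal_abs.comp hf.1.1 measurableSet_Ici) fun x hx =>
      support_abs.subset ((pos_iff_ne_zero.2 hc).trans_le hx).ne'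
  exact support_abs ▸ support_mem_sigmaFin_of_lintSR_ne_top superlevel_mem hf.2.ne

section FubiniOnRectangle

variable {α β : Type*} [MeasurableSpace α] [MeasurableSpace β] {S : Set (Set α)} {T : Set (Set β)}
  {μ : Set α → ℝ≥0∞} {ν : Set β → ℝ≥0∞} {A : Set α} {B : Set β} {f : α × β → EReal}

theorem exists_null_forall_integrableE_section (hA : IsCarrier S A) (hB : IsCarrier T B)
    (hμ : IsMeasure S μ) (hν : IsMeasure T ν) [SFinite (hB.traceMeasure hν)] (hf : Measurable f)
    (hfAB : support f ⊆ A ×ˢ B)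
    (hfin : ∫⁻ z, (f z).abs ∂(hA.traceMeasure hμ).prod (hB.traceMeasure hν) < ⊤) :
    ∃ N ∈ S, μ N = 0 ∧ ∀ s ∉ N, IntegrableE T ν fun t => f (s, t) := by
  obtain ⟨N, hNS, hN0, hN⟩ :=
    hA.exists_null_of_ae hμ (ae_lintegral_abs_section_lt_top hf.aemeasurable hfin)
  have section_support (s : α) : support (fun t => f (s, t)) ⊆ B := fun _ ht => (hfAB ht).2
  refine ⟨N, hNS, hN0, fun s hs =>
    ⟨hB.srMeasurableE (hf.comp measurable_prodMk_left) (section_support s), ?_⟩⟩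
  rw [hB.lintSR_abs_eq_lintegral hν (section_support s)]
  by_cases hsA : s ∈ A
  · exact hN s hsA hs
  · have section_eq_zero (t : β) : f (s, t) = 0 := notMem_support.1 fun h => hsA (hfAB h).1
    simp only [section_eq_zero, EReal.abs_zero, lintegral_zero, zero_lt_top]

theorem erealIntegral_prod_traceMeasure (hA : IsCarrier S A) (hB : IsCarrier T B)
    (hμ : IsMeasure S μ) (hν : IsMeasure T ν) [SFinite (hA.traceMeasure hμ)]
    [SFinite (hB.traceMeasure hν)] (hf : Measurable f) (hfAB : support f ⊆ A ×ˢ B)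
    (hfin : ∫⁻ z, (f z).abs ∂(hA.traceMeasure hμ).prod (hB.traceMeasure hν) < ⊤) :
    erealIntegral ((hA.traceMeasure hμ).prod (hB.traceMeasure hν)) f =
      integralE S μ fun s => integralE T ν fun t => f (s, t) := by
  have inner_eq (s : α) : integralE T ν (fun t => f (s, t)) =
      erealIntegral (hB.traceMeasure hν) fun t => f (s, t) :=
    hB.integralE_eq_erealIntegral hν fun _ ht => (hfAB ht).2
  have outer_support :
      support (fun s => erealIntegral (hB.traceMeasure hν) fun t => f (s, t)) ⊆ A := fun s hs => by
    by_contra hsA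
    have section_eq_zero (t : β) : f (s, t) = 0 := notMem_support.1 fun h => hsA (hfAB h).1
    simp [erealIntegral, section_eq_zero] at hs
  simp_rw [inner_eq]
  rw [hA.integralE_eq_erealIntegral hμ outer_support, erealIntegral_prod hf.aemeasurable hfin]

end FubiniOnRectangle

section ProductMeasure

variable {α β : Type*}

theorem isPiSystem_measurableSet_lt_top [MeasurableSpace α] (M : Measure α) :
    IsPiSystem {E | MeasurableSet E ∧ M E < ⊤} :=
  fun _ hE _ hF _ => ⟨hE.1.inter hF.1, (measure_mono inter_subset_left).trans_lt hE.2⟩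

theorem generateFrom_measurableSet_lt_top [m : MeasurableSpace α] (M : Measure α) [SigmaFinite M] :
    MeasurableSpace.generateFrom {E | MeasurableSet E ∧ M E < ⊤} = m := by
  refine (MeasurableSpace.generateFrom_le fun _ hE => hE.1).antisymm fun E hE => ?_
  rw [← inter_univ E, ← iUnion_spanningSets M, inter_iUnion]
  exact .iUnion fun n => MeasurableSpace.measurableSet_generateFrom
    ⟨hE.inter (measurableSet_spanningSets M n),
      (measure_mono inter_subset_right).trans_lt (measure_spanningSets_lt_top M n)⟩

theorem prod_eq_of_forall_lt_top [MeasurableSpace α] [MeasurableSpace β] {M : Measure α}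
    {N : Measure β} [SigmaFinite M] [SigmaFinite N] {R : Measure (α × β)}
    (hR : ∀ E F, MeasurableSet E → MeasurableSet F → M E < ⊤ → N F < ⊤ →
      R (E ×ˢ F) = M E * N F) : M.prod N = R :=
  Measure.prod_eq_generateFrom (generateFrom_measurableSet_lt_top M)
    (generateFrom_measurableSet_lt_top N) (isPiSystem_measurableSet_lt_top M)
    (isPiSystem_measurableSet_lt_top N)
    ⟨spanningSets M, fun n => ⟨measurableSet_spanningSets M n, measure_spanningSets_lt_top M n⟩,
      measure_spanningSets_lt_top M, iUnion_spanningSets M⟩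
    ⟨spanningSets N, fun n => ⟨measurableSet_spanningSets N n, measure_spanningSets_lt_top N n⟩,
      measure_spanningSets_lt_top N, iUnion_spanningSets N⟩
    fun E hE F hF => hR E F hE.1 hF.1 hE.2 hF.2

variable {S : Set (Set α)} {T : Set (Set β)} {μ : Set α → ℝ≥0∞} {ν : Set β → ℝ≥0∞}
  {lam : Set (α × β) → ℝ≥0∞}

theorem IsProdMeasure.prod_traceMeasure [MeasurableSpace α] [MeasurableSpace β]
    (hlam : IsProdMeasure S T μ ν lam) {A : Set α} {B : Set β} (hA : IsCarrier S A)
    (hB : IsCarrier T B) (hμ : IsMeasure S μ) (hν : IsMeasure T ν)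
    [SigmaFinite (hA.traceMeasure hμ)] [SigmaFinite (hB.traceMeasure hν)] :
    (hA.traceMeasure hμ).prod (hB.traceMeasure hν) = (hA.prod hB).traceMeasure hlam.1 := by
  refine prod_eq_of_forall_lt_top fun E F hE hF hμE hνF => ?_
  rw [hA.traceMeasure_apply hμ hE] at hμE ⊢
  rw [hB.traceMeasure_apply hν hF] at hνF ⊢
  rw [(hA.prod hB).traceMeasure_apply hlam.1 (hE.prod hF), prod_inter_prod]
  exact hlam.2.1 _ (hA.inter_mem hE) _ (hB.inter_mem hF) hμE hνF

theorem IsProdMeasure.exists_subset_prod_of_mem_sigmaFin (hlam : IsProdMeasure S T μ ν lam)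
    (hS : ∅ ∈ S) (hT : ∅ ∈ T) (hμ : μ ∅ = 0) (hν : ν ∅ = 0) {E : Set (α × β)}
    (hE : E ∈ sigmaFin (prodSR S T) lam) :
    ∃ A ∈ sigmaFin S μ, ∃ B ∈ sigmaFin T ν, E ⊆ A ×ˢ B := by
  rw [hlam.2.2] at hE
  refine genSR_subset (C := {E | ∃ A ∈ sigmaFin S μ, ∃ B ∈ sigmaFin T ν, E ⊆ A ×ˢ B})
    ⟨?_, ?_, ?_⟩ ?_ hE
  · exact ⟨∅, mem_sigmaFin_of_lt_top hS (by simp [hμ]), ∅,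
      mem_sigmaFin_of_lt_top hT (by simp [hν]), empty_subset _⟩
  · rintro E F ⟨A, hA, B, hB, hEAB⟩ -
    exact ⟨A, hA, B, hB, sdiff_subset.trans hEAB⟩
  · intro E hE
    choose A hA B hB hEAB using hE
    exact ⟨_, iUnion_mem_sigmaFin hA, _, iUnion_mem_sigmaFin hB, iUnion_subset fun n =>
      (hEAB n).trans (prod_mono (subset_iUnion A n) (subset_iUnion B n))⟩
  · rintro _ ⟨A, hA, B, hB, hμA, hνB, rfl⟩
    exact ⟨A, mem_sigmaFin_of_lt_top hA hμA, B, mem_sigmaFin_of_lt_top hB hνB, subset_rfl⟩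

end ProductMeasure

/-- Fubini: for a function integrable with respect to the product
of arbitrary measures, almost all sections are integrable and the integral
equals both iterated integrals. -/
theorem stmt_17 {α β : Type*} (S : Set (Set α)) (T : Set (Set β))
    (μ : Set α → ℝ≥0∞) (ν : Set β → ℝ≥0∞)
    (hS : IsSigmaRing S) (hT : IsSigmaRing T)
    (hμ : IsMeasure S μ) (hν : IsMeasure T ν)
    (lam : Set (α × β) → ℝ≥0∞) (hlam : IsProdMeasure S T μ ν lam)
    (f : α × β → EReal) (hf : IntegrableE (prodSR S T) lam f) :
    (∃ N ∈ S, μ N = 0 ∧ ∀ s ∉ N, IntegrableE T ν (fun t => f (s, t))) ∧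
    (∃ N ∈ T, ν N = 0 ∧ ∀ t ∉ N, IntegrableE S μ (fun s => f (s, t))) ∧
    integralE (prodSR S T) lam f =
      integralE S μ (fun s => integralE T ν (fun t => f (s, t))) ∧
    integralE (prodSR S T) lam f =
      integralE T ν (fun t => integralE S μ (fun s => f (s, t))) := by
  let _ := genSA S
  let _ := genSA T
  obtain ⟨A, hAσ, B, hBσ, hfAB⟩ := hlam.exists_subset_prod_of_mem_sigmaFin hS.1 hT.1 hμ.1 hν.1
    (hf.support_mem_sigmaFin (isSigmaRing_genSR _))
  have hA : IsCarrier S A := hS.isCarrier (hS.sigmaFin_subset hAσ)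
  have hB : IsCarrier T B := hT.isCarrier (hT.sigmaFin_subset hBσ)
  have := hA.sigmaFinite_traceMeasure hμ hAσ
  have := hB.sigmaFinite_traceMeasure hν hBσ
  have hfm : Measurable f := (hA.prod hB).measurable hf.1
  have hfin := hf.2
  rw [(hA.prod hB).lintSR_abs_eq_lintegral hlam.1 hfAB, ← hlam.prod_traceMeasure hA hB hμ hν]
    at hfin
  have hfm_swap : Measurable fun z : β × α => f z.swap := hfm.comp measurable_swap
  have hfBA_swap : support (fun z : β × α => f z.swap) ⊆ B ×ˢ A := fun _ hz => (hfAB hz).symm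
  have hfin_swap := (lintegral_prod_swap fun z => (f z).abs).trans_lt hfin
  rw [(hA.prod hB).integralE_eq_erealIntegral hlam.1 hfAB, ← hlam.prod_traceMeasure hA hB hμ hν]
  exact ⟨exists_null_forall_integrableE_section hA hB hμ hν hfm hfAB hfin,
    exists_null_forall_integrableE_section hB hA hν hμ hfm_swap hfBA_swap hfin_swap,
    erealIntegral_prod_traceMeasure hA hB hμ hν hfm hfAB hfin,
    (erealIntegral_prod_swap f).symm.trans
      (erealIntegral_prod_traceMeasure hB hA hν hμ hfm_swap hfBA_swap hfin_swap)⟩
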